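/- Let n ≥ 2 and let Σ be a nonempty family of hyperplanes of PG(2n+1,q) satisfying property (P1^−). Then |Σ| = q^n(q^{n+1} + 1); consequently the number of black points is (q^{n+1}+1)(q^n−1)/(q−1), and every hyperplane of Σ contains exactly (q^{2n}−1)/(q−1) black points. -/

import Mathlib

open Finset in
theorem aux_points {F V : Type} [Field F] [Fintype F] [AddCommGroup V] [Module F V] [Fintype V]
    [Fintype (Submodule F V)] [DecidableEq (Submodule F V)] [DecidableEq V]
    (U : Submodule F V) (P : Finset (Submodule F V))
    (hP : ∀ p, p ∈ P ↔ Module.finrank F p = 1 ∧ p ≤ U) :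
    ((Fintype.card F : ℤ) - 1) * (#P : ℤ) = (Fintype.card F : ℤ) ^ (Module.finrank F U) - 1 := by
  classical
  have hcard : ∀ W : Submodule F V, (#{v : V | v ∈ W ∧ v ≠ 0} : ℤ)
      = (Fintype.card F : ℤ) ^ (Module.finrank F W) - 1 := by
    intro W
    have h1 : ({v : V | v ∈ W ∧ v ≠ 0} : Finset V) = ({v : V | v ∈ W} : Finset V).erase 0 := by
      ext v; simp [and_comm]
    have h2 : #({v : V | v ∈ W} : Finset V) = Fintype.card F ^ (Module.finrank F W) := by
      rw [← Module.card_eq_pow_finrank (K := F) (V := W), Fintype.card_subtype]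
    have h3 := Finset.card_erase_add_one (s := ({v : V | v ∈ W} : Finset V)) (a := 0) (by simp)
    rw [h1]
    rw [h2] at h3
    have h4 : ((#(({v : V | v ∈ W} : Finset V).erase 0) : ℤ)) + 1
      = (Fintype.card F : ℤ) ^ (Module.finrank F W) := by exact_mod_cast h3
    linarith
  have hmaps : ∀ v ∈ ({v : V | v ∈ U ∧ v ≠ 0} : Finset V), Submodule.span F {v} ∈ P := by
    intro v hv
    simp only [Finset.mem_filter, Finset.mem_univ, true_and] at hv
    rw [hP]
    exact ⟨finrank_span_singleton hv.2, by simpa using hv.1⟩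
  have hfib := Finset.card_eq_sum_card_fiberwise hmaps
  have hf : ∀ p ∈ P, (#{v ∈ ({v : V | v ∈ U ∧ v ≠ 0} : Finset V) | Submodule.span F {v} = p} : ℤ)
      = (Fintype.card F : ℤ) - 1 := by
    intro p hp
    rw [hP] at hp
    have := hcard p
    rw [hp.1, pow_one] at this
    rw [← this]
    congr 2
    ext v
    simp only [Finset.mem_filter, Finset.mem_univ, true_and]
    constructor
    · rintro ⟨⟨_, h0⟩, rfl⟩
      exact ⟨Submodule.mem_span_singleton_self v, h0⟩
    · rintro ⟨hv, h0⟩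
      refine ⟨⟨hp.2 hv, h0⟩, ?_⟩
      apply Submodule.eq_of_le_of_finrank_eq
      · simpa using hv
      · rw [finrank_span_singleton h0, hp.1]
  have h5 := hcard U
  rw [hfib, Nat.cast_sum, Finset.sum_congr rfl hf, Finset.sum_const, nsmul_eq_mul] at h5
  linarith

theorem aux_inf {F V : Type} [Field F] [AddCommGroup V] [Module F V] [FiniteDimensional F V]
    (k : ℕ) (hV : Module.finrank F V = k + 2) (A B : Submodule F V)
    (hA : Module.finrank F A = k + 1) (hB : Module.finrank F B = k + 1) (hne : A ≠ B) :
    Module.finrank F (A ⊓ B : Submodule F V) = k := by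
  have h := Submodule.finrank_sup_add_finrank_inf_eq A B
  have h1 : Module.finrank F (A ⊔ B : Submodule F V) ≤ k + 2 := hV ▸ Submodule.finrank_le _
  have h2 : A < A ⊔ B := by
    refine lt_of_le_of_ne le_sup_left fun he => hne ?_
    have : B ≤ A := he ▸ le_sup_right
    exact (Submodule.eq_of_le_of_finrank_eq this (by rw [hA, hB])).symm
  have h3 := Submodule.finrank_lt_finrank_of_lt h2
  omega

theorem aux_root (n q : ℕ) (hn : 2 ≤ n) (hq : 2 ≤ q) (s : ℤ)
    (h : ((q : ℤ)^n - 1) * s = ((q : ℤ)^n)^2 * (q * (q : ℤ)^n - 1)) : False := by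
  have hlt : (q : ℤ) < (q : ℤ)^n := by
    have : q ^ 1 < q ^ n := Nat.pow_lt_pow_right (by omega) (by omega)
    exact_mod_cast (by simpa using this)
  generalize (q : ℤ)^n = x at *
  have hq' : (2 : ℤ) ≤ q := by exact_mod_cast hq
  have hd : (x - 1) ∣ (q : ℤ) - 1 := ⟨s - q * x ^ 2 - (q - 1) * (x + 1), by linarith⟩
  have := Int.le_of_dvd (by linarith) hd
  linarith

theorem aux_div (a b c : ℕ) (hq : 0 < b) (h : b * a = c) : a = c / b := by
  rw [← h, Nat.mul_div_cancel_left _ hq]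


/-- For `n ≥ 2` and a nonempty family `S` of hyperplanes of `PG(2n+1,q)`
satisfying (P1⁻): `|S| = q^n(q^{n+1}+1)`, the number of black points is
`(q^{n+1}+1)(q^n-1)/(q-1)`, and every hyperplane of `S` contains exactly `(q^{2n}-1)/(q-1)`
black points. -/
theorem stmt_15 (n : ℕ) (hn : 2 ≤ n)
    (F : Type) [Field F] [Fintype F] (q : ℕ) (hq : Fintype.card F = q)
    (S : Set (Submodule F (Fin (2*n+2) → F)))
    (hS : S.Nonempty)
    (hhyp : ∀ π ∈ S, Module.finrank F π = 2*n+1)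
    (hP1 : ∀ p : Submodule F (Fin (2*n+2) → F), Module.finrank F p = 1 →
      {π ∈ S | p ≤ π}.ncard = q^n * (q^n + 1) ∨ {π ∈ S | p ≤ π}.ncard = q^(2*n)) :
    S.ncard = q^n * (q^(n+1) + 1) ∧
    {p : Submodule F (Fin (2*n+2) → F) | Module.finrank F p = 1 ∧
      {π ∈ S | p ≤ π}.ncard = q^n * (q^n + 1)}.ncard = (q^(n+1) + 1) * (q^n - 1) / (q - 1) ∧
    ∀ π ∈ S,
      {p : Submodule F (Fin (2*n+2) → F) | Module.finrank F p = 1 ∧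
        {σ ∈ S | p ≤ σ}.ncard = q^n * (q^n + 1) ∧ p ≤ π}.ncard = (q^(2*n) - 1)/(q - 1) := by
  classical
  have : Fintype (Submodule F (Fin (2*n+2) → F)) := Fintype.ofFinite _
  have hq2 : 2 ≤ q := hq ▸ Fintype.one_lt_card
  have hqz : (2 : ℤ) ≤ q := by exact_mod_cast hq2
  have hVr : Module.finrank F (Fin (2*n+2) → F) = 2*n+2 := by simp
  set x : ℤ := (q : ℤ)^n with hx
  have hxpos : 0 < x := by positivity
  have hxq : (q : ℤ) < x := by
    have : q ^ 1 < q ^ n := Nat.pow_lt_pow_right (by omega) (by omega)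
    rw [hx]; exact_mod_cast (by simpa using this)
  let Sf : Finset (Submodule F (Fin (2*n+2) → F)) := S.toFinset
  let P : Finset (Submodule F (Fin (2*n+2) → F)) := Finset.univ.filter fun p => Module.finrank F p = 1
  let m : Submodule F (Fin (2*n+2) → F) → ℕ := fun p => (Sf.filter fun π => p ≤ π).card
  have hm : ∀ p, {π ∈ S | p ≤ π}.ncard = m p := by
    intro p
    change _ = (Sf.filter fun π => p ≤ π).card
    rw [← Set.ncard_coe_finset]
    congr 1; ext π; simp [Sf]
  simp only [hm] at hP1 ⊢
  let Bl : Submodule F (Fin (2*n+2) → F) → Prop := fun p => m p = q^n * (q^n + 1)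
  have hmv : ∀ p ∈ P, (m p : ℤ) = x^2 + x * (if Bl p then 1 else 0) := by
    intro p hp
    have hp' : Module.finrank F p = 1 := by simpa [P] using hp
    by_cases hb : Bl p
    · simp only [hb, if_true]
      have : m p = q^n * (q^n + 1) := hb
      rw [this, hx]; push_cast; ring
    · simp only [hb, if_false]
      have : m p = q^(2*n) := (hP1 p hp').resolve_left hb
      rw [this, hx]; push_cast; ring
  have hpt : ∀ (U : Submodule F (Fin (2*n+2) → F)), ((q : ℤ) - 1) * ((P.filter fun p => p ≤ U).card : ℤ)
      = (q : ℤ) ^ (Module.finrank F U) - 1 := by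
    intro U
    have := aux_points U (P.filter fun p => p ≤ U) (by simp [P])
    rwa [hq] at this
  have hsn : S.ncard = Sf.card := Set.ncard_eq_toFinset_card' S
  have hSr : ∀ π ∈ Sf, Module.finrank F π = 2*n+1 := fun π h => hhyp π (by simpa [Sf] using h)
  set s : ℤ := (Sf.card : ℤ) with hs
  have e0 : (q : ℤ)^(2*n) = x^2 := by rw [hx]; ring
  have e1 : (q : ℤ)^(2*n+1) = q * x^2 := by rw [hx]; ring
  have e2 : (q : ℤ)^(2*n+2) = q^2 * x^2 := by rw [hx]; ring
  -- total number of points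
  have hc : ((q : ℤ) - 1) * (P.card : ℤ) = q^2 * x^2 - 1 := by
    have := hpt ⊤
    rw [finrank_top, hVr, e2] at this
    simpa using this
  have hcπ : ∀ π ∈ Sf, ((q : ℤ) - 1) * ((P.filter fun p => p ≤ π).card : ℤ) = q * x^2 - 1 := by
    intro π h
    rw [hpt, hSr π h, e1]
  -- first count
  have hA : ((q : ℤ) - 1) * ∑ p ∈ P, (m p : ℤ) = s * (q * x^2 - 1) := by
    have : ∑ p ∈ P, (m p : ℤ) = ∑ π ∈ Sf, ((P.filter fun p => p ≤ π).card : ℤ) := by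
      exact_mod_cast Finset.sum_card_bipartiteAbove_eq_sum_card_bipartiteBelow
        (s := P) (t := Sf) (fun p π => p ≤ π)
    rw [this, Finset.mul_sum, Finset.sum_congr rfl hcπ, Finset.sum_const, nsmul_eq_mul]
  have hAπ : ∀ π ∈ Sf, ((q : ℤ) - 1) * ∑ p ∈ P.filter (fun p => p ≤ π), (m p : ℤ)
      = (q * x^2 - 1) + (s - 1) * (x^2 - 1) := by
    intro π h
    have h1 : ∑ p ∈ P.filter (fun p => p ≤ π), (m p : ℤ)
        = ∑ σ ∈ Sf, (((P.filter fun p => p ≤ π).filter fun p => p ≤ σ).card : ℤ) := by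
      exact_mod_cast Finset.sum_card_bipartiteAbove_eq_sum_card_bipartiteBelow
        (s := P.filter fun p => p ≤ π) (t := Sf) (fun p σ => p ≤ σ)
    have h2 : ∀ σ ∈ Sf.erase π,
        ((q : ℤ) - 1) * (((P.filter fun p => p ≤ π).filter fun p => p ≤ σ).card : ℤ) = x^2 - 1 := by
      intro σ hσ
      rw [Finset.mem_erase] at hσ
      have := hpt (π ⊓ σ)
      rw [aux_inf (2*n) hVr π σ (hSr π h) (hSr σ hσ.2) (Ne.symm hσ.1), e0] at this
      rw [← this, Finset.filter_filter]
      simp only [le_inf_iff]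
    rw [h1, Finset.mul_sum, ← Finset.add_sum_erase _ _ h, Finset.sum_congr rfl h2,
      Finset.sum_const, nsmul_eq_mul, Finset.filter_filter]
    have h3 : ((Sf.erase π).card : ℤ) = s - 1 := by
      have := Finset.card_erase_add_one h
      rw [hs]; push_cast [← this]; ring
    rw [h3]
    simp only [and_self]
    rw [hcπ π h]
  -- second moment
  have hM : ∑ p ∈ P, (m p : ℤ) * (m p : ℤ)
      = ∑ π ∈ Sf, ∑ p ∈ P.filter (fun p => p ≤ π), (m p : ℤ) := by
    simp only [Finset.sum_filter]
    rw [Finset.sum_comm]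
    refine Finset.sum_congr rfl fun p _ => ?_
    rw [← Finset.sum_filter, Finset.sum_const, nsmul_eq_mul]
  have hM2 : ((q : ℤ) - 1) * ∑ p ∈ P, (m p : ℤ) * (m p : ℤ)
      = s * ((q * x^2 - 1) + (s - 1) * (x^2 - 1)) := by
    rw [hM, Finset.mul_sum, Finset.sum_congr rfl hAπ, Finset.sum_const, nsmul_eq_mul]
  -- evaluation through black points
  set b : ℤ := ((P.filter Bl).card : ℤ) with hb
  have hsum : ∀ Q : Finset (Submodule F (Fin (2*n+2) → F)), Q ⊆ P →
      ∑ p ∈ Q, (m p : ℤ) = x^2 * (Q.card : ℤ) + x * ((Q.filter Bl).card : ℤ) := by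
    intro Q hQ
    rw [Finset.sum_congr rfl fun p hp => hmv p (hQ hp), Finset.sum_add_distrib, ← Finset.mul_sum,
      Finset.sum_const, nsmul_eq_mul, Finset.sum_boole]
    ring
  have hA2 := hsum P (Finset.Subset.refl _)
  have hM3 : ∑ p ∈ P, (m p : ℤ) * (m p : ℤ) = (2*x^2 + x) * (∑ p ∈ P, (m p : ℤ))
      - x^2 * (x^2+x) * (P.card : ℤ) := by
    rw [Finset.mul_sum, mul_comm (x^2 * (x^2+x)), ← nsmul_eq_mul, ← Finset.sum_const,
      ← Finset.sum_sub_distrib]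
    refine Finset.sum_congr rfl fun p hp => ?_
    rw [hmv p hp]
    split_ifs <;> ring
  have hquad : (x + 1) * ((s - x * (q * x + 1)) * ((x - 1) * s - x^2 * (q * x - 1))) = 0 := by
    rw [hM3] at hM2
    linear_combination (-1) * hM2 + (2*x^2+x) * hA - x^2*(x^2+x) * hc
  have hsv : s = x * (q * x + 1) := by
    rcases mul_eq_zero.1 hquad with h | h
    · linarith
    rcases mul_eq_zero.1 h with h | h
    · linarith
    · exact (aux_root n q hn hq2 s (by rw [← hx]; linarith)).elim
  have hbv : ((q : ℤ) - 1) * b = (q * x + 1) * (x - 1) := by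
    rw [hA2] at hA
    apply mul_left_cancel₀ hxpos.ne'
    rw [hsv] at hA
    linear_combination hA - x^2 * hc
  have hx1 : 1 ≤ q^n := Nat.one_le_pow _ _ (by omega)
  have hx2 : 1 ≤ q^(2*n) := Nat.one_le_pow _ _ (by omega)
  refine ⟨?_, ?_, ?_⟩
  · rw [hsn]
    zify
    rw [← hs, hsv, hx]; ring
  · have : {p : Submodule F (Fin (2*n+2) → F) | Module.finrank F p = 1 ∧ m p = q^n * (q^n + 1)}.ncard
        = (P.filter Bl).card := by
      rw [← Set.ncard_coe_finset]
      congr 1; ext p; simp [P, Bl]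
    rw [this]
    apply aux_div _ _ _ (by omega)
    zify [hx1, (by omega : 1 ≤ q)]
    rw [← hb, hbv, hx]; ring
  · intro π hπ
    have hπ' : π ∈ Sf := by simpa [Sf] using hπ
    have : {p : Submodule F (Fin (2*n+2) → F) | Module.finrank F p = 1 ∧ m p = q^n * (q^n + 1) ∧ p ≤ π}.ncard
        = ((P.filter fun p => p ≤ π).filter Bl).card := by
      rw [← Set.ncard_coe_finset]
      congr 1; ext p; simp [P, Bl]; tauto
    rw [this]
    apply aux_div _ _ _ (by omega)
    zify [hx2, (by omega : 1 ≤ q)]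
    have h1 := hAπ π hπ'
    rw [hsum _ (Finset.filter_subset _ _), hsv] at h1
    have h2 := hcπ π hπ'
    rw [e0]
    apply mul_left_cancel₀ hxpos.ne'
    linear_combination h1 - x^2 * h2
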